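/- For any prime power q ≥ 5, the imaginary chords of the twisted cubic C form a single orbit of lines under G_q, and the stabilizer in G_q of any imaginary chord has order 2(q+1). -/

import Mathlib

open Matrix Submodule

noncomputable section

/-- Row-vector action of an invertible matrix on subspaces of `F^4`:
a projectivity of `PG(3,q)` induced by the matrix. -/
def projAct (F : Type) [Field F] (A : GL (Fin 4) F) :
    Submodule F (Fin 4 → F) → Submodule F (Fin 4 → F) :=
  fun W => W.map (Matrix.vecMulLinear (A : Matrix (Fin 4) (Fin 4) F))

/-- Representative vectors of the points of the twisted cubic. -/
def cubicVecs (F : Type) [Field F] : Set (Fin 4 → F) :=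
  {v | (∃ t : F, v = ![t ^ 3, t ^ 2, t, 1]) ∨ v = ![1, 0, 0, 0]}

/-- The twisted cubic, as a set of projective points (1-dimensional subspaces). -/
def twistedCubic (F : Type) [Field F] : Set (Submodule F (Fin 4 → F)) :=
  (fun v => Submodule.span F {v}) '' cubicVecs F

/-- The group `G_q` of projectivities fixing the twisted cubic, modeled as those maps
on subspaces that are induced by an invertible matrix and map the cubic onto itself. -/
def Gq (F : Type) [Field F] :
    Set ((Submodule F (Fin 4 → F)) → (Submodule F (Fin 4 → F))) :=
  {f | (∃ A : GL (Fin 4) F, f = projAct F A) ∧ f '' twistedCubic F = twistedCubic F}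

def isPoint (F : Type) [Field F] (W : Submodule F (Fin 4 → F)) : Prop :=
  Module.finrank F W = 1

def isLine (F : Type) [Field F] (W : Submodule F (Fin 4 → F)) : Prop :=
  Module.finrank F W = 2

/-- The orbit of a line under `G_q`. -/
def lineOrbit (F : Type) [Field F] (ℓ : Submodule F (Fin 4 → F)) :
    Set (Submodule F (Fin 4 → F)) :=
  {m | ∃ f ∈ Gq F, f ℓ = m}

/-- The stabilizer of a line in `G_q`. -/
def lineStab (F : Type) [Field F] (ℓ : Submodule F (Fin 4 → F)) :
    Set ((Submodule F (Fin 4 → F)) → (Submodule F (Fin 4 → F))) :=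
  {f ∈ Gq F | f ℓ = ℓ}

/-- The linear form `y ↦ c0 y0 + c1 y1 + c2 y2 + c3 y3` defining a plane. -/
def planeForm (F : Type) [Field F] (c : Fin 4 → F) : (Fin 4 → F) →ₗ[F] F where
  toFun y := c 0 * y 0 + c 1 * y 1 + c 2 * y 2 + c 3 * y 3
  map_add' a b := by simp only [Pi.add_apply]; ring
  map_smul' r a := by simp only [Pi.smul_apply, smul_eq_mul, RingHom.id_apply]; ring

/-- The plane `π(c0,c1,c2,c3)`. -/
def planeOf (F : Type) [Field F] (c : Fin 4 → F) : Submodule F (Fin 4 → F) :=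
  LinearMap.ker (planeForm F c)

/-- The null polarity `𝔄`: the polar subspace of `W` w.r.t. the bilinear form
sending a point `(x0:x1:x2:x3)` to the plane `π(x3, −3x2, 3x1, −x0)`. -/
def nullPolarity (F : Type) [Field F] (W : Submodule F (Fin 4 → F)) :
    Submodule F (Fin 4 → F) :=
  ⨅ x ∈ (W : Set (Fin 4 → F)), planeOf F ![x 3, -(3 * x 2), 3 * x 1, -(x 0)]

/-- The tangent line to the twisted cubic at `P(t)`, `t ∈ F`. -/
def tangentAt (F : Type) [Field F] (t : F) : Submodule F (Fin 4 → F) :=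
  Submodule.span F {![t ^ 3, t ^ 2, t, 1], ![3 * t ^ 2, 2 * t, 1, 0]}

/-- The tangent line to the twisted cubic at `P(∞)`. -/
def tangentAtInf (F : Type) [Field F] : Submodule F (Fin 4 → F) :=
  Submodule.span F {![1, 0, 0, 0], ![0, 1, 0, 0]}

def isTangent (F : Type) [Field F] (ℓ : Submodule F (Fin 4 → F)) : Prop :=
  (∃ t : F, ℓ = tangentAt F t) ∨ ℓ = tangentAtInf F

/-- The osculating plane at `P(t)`, `t ∈ F`. -/
def oscPlane (F : Type) [Field F] (t : F) : Submodule F (Fin 4 → F) :=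
  planeOf F ![1, -(3 * t), 3 * t ^ 2, -(t ^ 3)]

/-- The osculating plane at `P(∞)`. -/
def oscPlaneInf (F : Type) [Field F] : Submodule F (Fin 4 → F) :=
  planeOf F ![0, 0, 0, 1]

def isOscPlane (F : Type) [Field F] (π : Submodule F (Fin 4 → F)) : Prop :=
  (∃ t : F, π = oscPlane F t) ∨ π = oscPlaneInf F

/-- A real chord: the line joining two distinct points of the twisted cubic. -/
def isRealChord (F : Type) [Field F] (ℓ : Submodule F (Fin 4 → F)) : Prop :=
  ∃ u ∈ cubicVecs F, ∃ v ∈ cubicVecs F,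
    Submodule.span F {u} ≠ Submodule.span F {v} ∧ ℓ = Submodule.span F {u, v}

/-- A real axis: the intersection of two distinct osculating planes. -/
def isRealAxis (F : Type) [Field F] (ℓ : Submodule F (Fin 4 → F)) : Prop :=
  ∃ π₁ π₂ : Submodule F (Fin 4 → F),
    isOscPlane F π₁ ∧ isOscPlane F π₂ ∧ π₁ ≠ π₂ ∧ ℓ = π₁ ⊓ π₂

/-- The `F_{q²}`-extension of a subspace of `F^4`. -/
def extendSub (F K : Type) [Field F] [Field K] [Algebra F K]
    (W : Submodule F (Fin 4 → F)) : Submodule K (Fin 4 → K) :=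
  Submodule.span K ((fun v i => algebraMap F K (v i)) '' (W : Set (Fin 4 → F)))

/-- An external line: a line containing no point of the twisted cubic. -/
def isExternal (F : Type) [Field F] (ℓ : Submodule F (Fin 4 → F)) : Prop :=
  isLine F ℓ ∧ ∀ P ∈ twistedCubic F, ¬ P ≤ ℓ

/-- An imaginary chord: a line disjoint from the cubic whose `F_{q²}`-extension joins a
pair of Frobenius-conjugate points `P(t)`, `P(t^q)` of the cubic over `F_{q²}`. -/
def isImagChord (F K : Type) [Field F] [Field K] [Algebra F K] (q : ℕ)
    (ℓ : Submodule F (Fin 4 → F)) : Prop :=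
  isExternal F ℓ ∧
  ∃ t : K, t ∉ Set.range (algebraMap F K) ∧
    extendSub F K ℓ =
      Submodule.span K
        ({![t ^ 3, t ^ 2, t, 1], ![(t ^ q) ^ 3, (t ^ q) ^ 2, t ^ q, 1]} :
          Set (Fin 4 → K))

/-- An imaginary axis: a line whose `F_{q²}`-extension is the intersection of a pair of
Frobenius-conjugate osculating planes `π_osc(t)`, `π_osc(t^q)` over `F_{q²}`. -/
def isImagAxis (F K : Type) [Field F] [Field K] [Algebra F K] (q : ℕ)
    (ℓ : Submodule F (Fin 4 → F)) : Prop :=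
  isLine F ℓ ∧
  ∃ t : K, t ∉ Set.range (algebraMap F K) ∧
    extendSub F K ℓ =
      planeOf K ![1, -(3 * t), 3 * t ^ 2, -(t ^ 3)] ⊓
        planeOf K ![1, -(3 * t ^ q), 3 * (t ^ q) ^ 2, -((t ^ q) ^ 3)]

/-- A unisecant: a line meeting the twisted cubic in exactly one point. -/
def isUnisecant (F : Type) [Field F] (ℓ : Submodule F (Fin 4 → F)) : Prop :=
  isLine F ℓ ∧ ∃! P, P ∈ twistedCubic F ∧ P ≤ ℓ

/-- A `UΓ`-line: a non-tangent unisecant lying in some osculating plane. -/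
def isUGamma (F : Type) [Field F] (ℓ : Submodule F (Fin 4 → F)) : Prop :=
  isUnisecant F ℓ ∧ ¬ isTangent F ℓ ∧ ∃ π, isOscPlane F π ∧ ℓ ≤ π

/-- A `UnΓ`-line: a non-tangent unisecant lying in no osculating plane. -/
def isUnGamma (F : Type) [Field F] (ℓ : Submodule F (Fin 4 → F)) : Prop :=
  isUnisecant F ℓ ∧ ¬ isTangent F ℓ ∧ ∀ π, isOscPlane F π → ¬ ℓ ≤ π

/-- An `EΓ`-line: an external line, other than an imaginary chord, lying in some
osculating plane. -/
def isEGamma (F K : Type) [Field F] [Field K] [Algebra F K] (q : ℕ)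
    (ℓ : Submodule F (Fin 4 → F)) : Prop :=
  isExternal F ℓ ∧ ¬ isImagChord F K q ℓ ∧ ∃ π, isOscPlane F π ∧ ℓ ≤ π

/-- For `q ≡ 0 (mod 3)`: the axis of `Γ`, the line `x0 = x3 = 0`. -/
def axisLine (F : Type) [Field F] : Submodule F (Fin 4 → F) :=
  Submodule.span F {![0, 1, 0, 0], ![0, 0, 1, 0]}

/-- For `q ≡ 0 (mod 3)`: an `EA`-line, i.e. an external line, other than an imaginary
chord and other than the axis of `Γ`, meeting the axis of `Γ`. -/
def isEA (F K : Type) [Field F] [Field K] [Algebra F K] (q : ℕ)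
    (ℓ : Submodule F (Fin 4 → F)) : Prop :=
  isExternal F ℓ ∧ ¬ isImagChord F K q ℓ ∧ ℓ ≠ axisLine F ∧ ℓ ⊓ axisLine F ≠ ⊥

end


def v3 {F : Type} [Field F] (x y : F) : Fin 4 → F := ![x ^ 3, x ^ 2 * y, x * y ^ 2, y ^ 3]

def symM {F : Type} [Field F] (a b c d : F) : Matrix (Fin 4) (Fin 4) F :=
  !![a ^ 3, a ^ 2 * c, a * c ^ 2, c ^ 3;
     3 * a ^ 2 * b, a ^ 2 * d + 2 * a * b * c, 2 * a * c * d + b * c ^ 2, 3 * c ^ 2 * d;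
     3 * a * b ^ 2, b ^ 2 * c + 2 * a * b * d, a * d ^ 2 + 2 * b * c * d, 3 * c * d ^ 2;
     b ^ 3, b ^ 2 * d, b * d ^ 2, d ^ 3]

lemma vecMul4 {F : Type} [Field F] (v : Fin 4 → F) (A : Matrix (Fin 4) (Fin 4) F) (j : Fin 4) :
    (v ᵥ* A) j = v 0 * A 0 j + v 1 * A 1 j + v 2 * A 2 j + v 3 * A 3 j := by
  simp [Matrix.vecMul, dotProduct, Fin.sum_univ_four]

lemma v3_symM {F : Type} [Field F] (a b c d x y : F) :
    v3 x y ᵥ* symM a b c d = v3 (a * x + b * y) (c * x + d * y) := by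
  funext j
  rw [vecMul4]
  fin_cases j <;> simp [v3, symM] <;> ring

lemma symM_mul {F : Type} [Field F] (a b c d a' b' c' d' : F) :
    symM a b c d * symM a' b' c' d' =
      symM (a' * a + b' * c) (a' * b + b' * d) (c' * a + d' * c) (c' * b + d' * d) := by
  ext i j
  rw [Matrix.mul_apply, Fin.sum_univ_four]
  fin_cases i <;> fin_cases j <;> simp [symM] <;> ring

lemma symM_smul {F : Type} [Field F] (k a b c d : F) :
    symM (k * a) (k * b) (k * c) (k * d) = k ^ 3 • symM a b c d := by
  ext i j
  fin_cases i <;> fin_cases j <;> simp [symM] <;> ring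

lemma symM_one {F : Type} [Field F] (k : F) :
    symM k 0 0 k = k ^ 3 • (1 : Matrix (Fin 4) (Fin 4) F) := by
  ext i j
  fin_cases i <;> fin_cases j <;> simp [symM] <;> ring

lemma symM_mul_adj {F : Type} [Field F] (a b c d : F) :
    symM a b c d * symM d (-b) (-c) a = (a * d - b * c) ^ 3 • (1 : Matrix (Fin 4) (Fin 4) F) := by
  rw [symM_mul, ← symM_one]; congr 1 <;> ring

lemma symM_adj_mul {F : Type} [Field F] (a b c d : F) :
    symM d (-b) (-c) a * symM a b c d = (a * d - b * c) ^ 3 • (1 : Matrix (Fin 4) (Fin 4) F) := by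
  rw [symM_mul, ← symM_one]; congr 1 <;> ring

def symG {F : Type} [Field F] (a b c d : F) (h : a * d - b * c ≠ 0) : GL (Fin 4) F where
  val := symM a b c d
  inv := ((a * d - b * c) ^ 3)⁻¹ • symM d (-b) (-c) a
  val_inv := by
    rw [Matrix.mul_smul, symM_mul_adj, smul_smul, inv_mul_cancel₀ (pow_ne_zero _ h), one_smul]
  inv_val := by
    rw [Matrix.smul_mul, symM_adj_mul, smul_smul, inv_mul_cancel₀ (pow_ne_zero _ h), one_smul]

lemma symG_val {F : Type} [Field F] (a b c d : F) (h : a * d - b * c ≠ 0) :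
    (symG a b c d h : Matrix (Fin 4) (Fin 4) F) = symM a b c d := rfl

lemma projAct_smul {F : Type} [Field F] (A B : GL (Fin 4) F) (k : F) (hk : k ≠ 0)
    (h : (A : Matrix (Fin 4) (Fin 4) F) = k • (B : Matrix (Fin 4) (Fin 4) F)) :
    projAct F A = projAct F B := by
  funext W
  unfold projAct
  ext x
  simp only [Submodule.mem_map, Matrix.vecMulLinear_apply]
  constructor
  · rintro ⟨y, hy, rfl⟩
    exact ⟨k • y, W.smul_mem _ hy, by rw [h, Matrix.vecMul_smul, Matrix.smul_vecMul]⟩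
  · rintro ⟨y, hy, rfl⟩
    refine ⟨k⁻¹ • y, W.smul_mem _ hy, ?_⟩
    rw [h, Matrix.vecMul_smul, Matrix.smul_vecMul, smul_smul, mul_inv_cancel₀ hk, one_smul]

lemma projAct_span {F : Type} [Field F] (A : GL (Fin 4) F) (v : Fin 4 → F) :
    projAct F A (Submodule.span F {v}) =
      Submodule.span F {v ᵥ* (A : Matrix (Fin 4) (Fin 4) F)} := by
  unfold projAct
  rw [Submodule.map_span]; simp

lemma projAct_mul {F : Type} [Field F] (A B : GL (Fin 4) F) (W : Submodule F (Fin 4 → F)) :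
    projAct F B (projAct F A W) = projAct F (A * B) W := by
  unfold projAct
  rw [← Submodule.map_comp]
  congr 1
  refine LinearMap.ext fun x => ?_
  simp [Matrix.vecMul_vecMul]

lemma v3_mem {F : Type} [Field F] (x y : F) (h : x ≠ 0 ∨ y ≠ 0) :
    Submodule.span F {v3 x y} ∈ twistedCubic F := by
  by_cases hy : y = 0
  · subst hy
    have hx : x ≠ 0 := by simpa using h
    refine ⟨![1, 0, 0, 0], Or.inr rfl, ?_⟩
    have : v3 x 0 = (x ^ 3) • (![1, 0, 0, 0] : Fin 4 → F) := by
      funext j; fin_cases j <;> simp [v3]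
    simp only [this]
    rw [Submodule.span_singleton_smul_eq (IsUnit.mk0 _ (pow_ne_zero _ hx))]
  · refine ⟨![(x / y) ^ 3, (x / y) ^ 2, x / y, 1], Or.inl ⟨_, rfl⟩, ?_⟩
    have : v3 x y = (y ^ 3) • (![(x / y) ^ 3, (x / y) ^ 2, x / y, 1] : Fin 4 → F) := by
      funext j; fin_cases j <;> simp [v3] <;> field_simp
    simp only [this]
    rw [Submodule.span_singleton_smul_eq (IsUnit.mk0 _ (pow_ne_zero _ hy))]

lemma mem_twisted {F : Type} [Field F] (P : Submodule F (Fin 4 → F)) (h : P ∈ twistedCubic F) :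
    ∃ x y : F, (x ≠ 0 ∨ y ≠ 0) ∧ P = Submodule.span F {v3 x y} := by
  obtain ⟨v, hv, rfl⟩ := h
  rcases hv with ⟨t, rfl⟩ | rfl
  · exact ⟨t, 1, Or.inr one_ne_zero, by simp [v3]⟩
  · exact ⟨1, 0, Or.inl one_ne_zero, by simp [v3]⟩

lemma symG_maps {F : Type} [Field F] (a b c d : F) (h : a * d - b * c ≠ 0)
    (P : Submodule F (Fin 4 → F)) (hP : P ∈ twistedCubic F) :
    projAct F (symG a b c d h) P ∈ twistedCubic F := by
  obtain ⟨x, y, hxy, rfl⟩ := mem_twisted P hP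
  rw [projAct_span, symG_val, v3_symM]
  apply v3_mem
  by_contra hc
  push Not at hc
  obtain ⟨h1, h2⟩ := hc
  have e1 : (a * d - b * c) * x = 0 := by linear_combination d * h1 - b * h2
  have e2 : (a * d - b * c) * y = 0 := by linear_combination a * h2 - c * h1
  rcases hxy with hx | hy
  · exact (mul_ne_zero h hx) e1
  · exact (mul_ne_zero h hy) e2

lemma projAct_one' {F : Type} [Field F] (A : GL (Fin 4) F) (k : F) (hk : k ≠ 0)
    (h : (A : Matrix (Fin 4) (Fin 4) F) = k • (1 : Matrix (Fin 4) (Fin 4) F))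
    (W : Submodule F (Fin 4 → F)) : projAct F A W = W := by
  rw [projAct_smul A 1 k hk (by rw [h]; rfl)]
  unfold projAct
  ext x; simp

lemma symG_mem {F : Type} [Field F] (a b c d : F) (h : a * d - b * c ≠ 0) :
    projAct F (symG a b c d h) ∈ Gq F := by
  refine ⟨⟨_, rfl⟩, ?_⟩
  apply Set.Subset.antisymm
  · rintro _ ⟨P, hP, rfl⟩; exact symG_maps a b c d h P hP
  · intro P hP
    have h' : d * a - (-b) * (-c) ≠ 0 := by convert h using 1; ring
    refine ⟨_, symG_maps d (-b) (-c) a h' P hP, ?_⟩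
    rw [projAct_mul]
    apply projAct_one' _ _ (pow_ne_zero 3 h)
    rw [Units.val_mul, symG_val, symG_val, symM_adj_mul]

lemma quartic_zero {F : Type} [Field F] [Fintype F] (hq : 5 ≤ Fintype.card F)
    (p0 p1 p2 p3 p4 : F) (h : ∀ t : F, p0 + p1 * t + p2 * t ^ 2 + p3 * t ^ 3 + p4 * t ^ 4 = 0) :
    p0 = 0 ∧ p1 = 0 ∧ p2 = 0 ∧ p3 = 0 ∧ p4 = 0 := by
  open Polynomial in
  let p : F[X] := C p0 + C p1 * X + C p2 * X ^ 2 + C p3 * X ^ 3 + C p4 * X ^ 4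
  have hp : p = 0 := by
    apply Polynomial.eq_zero_of_natDegree_lt_card_of_eval_eq_zero p (f := (id : F → F))
      Function.injective_id
    · intro t; simpa [p] using h t
    · have : p.natDegree ≤ 4 := by
        simp only [p]; compute_degree
      omega
  have hc : ∀ n, p.coeff n = 0 := by intro n; rw [hp]; simp
  refine ⟨?_, ?_, ?_, ?_, ?_⟩
  · simpa [p, Polynomial.coeff_X, Polynomial.coeff_X_pow, Polynomial.coeff_C] using hc 0
  · simpa [p, Polynomial.coeff_X, Polynomial.coeff_X_pow, Polynomial.coeff_C] using hc 1
  · simpa [p, Polynomial.coeff_X, Polynomial.coeff_X_pow, Polynomial.coeff_C] using hc 2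
  · simpa [p, Polynomial.coeff_X, Polynomial.coeff_X_pow, Polynomial.coeff_C] using hc 3
  · simpa [p, Polynomial.coeff_X, Polynomial.coeff_X_pow, Polynomial.coeff_C] using hc 4

lemma diag_case {F : Type} [Field F] [Fintype F] (hq : 5 ≤ Fintype.card F)
    (B : Matrix (Fin 4) (Fin 4) F) (hB : B.det ≠ 0)
    (l m : F) (h0 : v3 1 0 ᵥ* B = l • v3 1 0) (h3 : v3 0 1 ᵥ* B = m • v3 0 1)
    (h : ∀ t : F, ∃ k x y : F, v3 t 1 ᵥ* B = k • v3 x y) :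
    ∃ k a d : F, k ≠ 0 ∧ a ≠ 0 ∧ d ≠ 0 ∧ B = k • symM a 0 0 d := by
  have r0 : ∀ j, B 0 j = (l • v3 1 0 : Fin 4 → F) j := by
    intro j; rw [← h0, vecMul4]; simp [v3]
  have r3 : ∀ j, B 3 j = (m • v3 0 1 : Fin 4 → F) j := by
    intro j; rw [← h3, vecMul4]; simp [v3]
  have b00 : B 0 0 = l := by rw [r0]; simp [v3]
  have b01 : B 0 1 = 0 := by rw [r0]; simp [v3]
  have b02 : B 0 2 = 0 := by rw [r0]; simp [v3]
  have b03 : B 0 3 = 0 := by rw [r0]; simp [v3]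
  have b30 : B 3 0 = 0 := by rw [r3]; simp [v3]
  have b31 : B 3 1 = 0 := by rw [r3]; simp [v3]
  have b32 : B 3 2 = 0 := by rw [r3]; simp [v3]
  have b33 : B 3 3 = m := by rw [r3]; simp [v3]
  have hl : l ≠ 0 := by
    rintro rfl
    exact hB (Matrix.det_eq_zero_of_row_eq_zero 0 (fun j => by rw [r0]; simp))
  have hm : m ≠ 0 := by
    rintro rfl
    exact hB (Matrix.det_eq_zero_of_row_eq_zero 3 (fun j => by rw [r3]; simp))
  have key : ∀ t : F,
      (v3 t 1 ᵥ* B) 1 * (v3 t 1 ᵥ* B) 3 = (v3 t 1 ᵥ* B) 2 ^ 2 ∧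
      (v3 t 1 ᵥ* B) 0 * (v3 t 1 ᵥ* B) 2 = (v3 t 1 ᵥ* B) 1 ^ 2 := by
    intro t
    obtain ⟨k, x, y, e⟩ := h t
    rw [e]
    constructor <;> simp [v3] <;> ring
  simp only [vecMul4, b00, b01, b02, b03, b30, b31, b32, b33] at key
  simp [v3] at key
  obtain ⟨-, q1, q2, q3, q4⟩ := quartic_zero hq 0 (B 2 1 * m)
    (B 1 1 * m + B 2 1 * B 2 3 - B 2 2 ^ 2)
    (B 1 1 * B 2 3 + B 2 1 * B 1 3 - 2 * B 1 2 * B 2 2) (B 1 1 * B 1 3 - B 1 2 ^ 2)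
    (fun t => by linear_combination (key t).1)
  obtain ⟨-, s1, s2, s3, s4⟩ := quartic_zero hq 0 (B 2 0 * B 2 2 - B 2 1 ^ 2)
    (B 1 0 * B 2 2 + B 2 0 * B 1 2 - 2 * B 1 1 * B 2 1)
    (l * B 2 2 + B 1 0 * B 1 2 - B 1 1 ^ 2) (l * B 1 2)
    (fun t => by
      by_cases ht : t = 0
      · subst ht; ring
      · have := (key t).2
        apply mul_left_cancel₀ ht
        linear_combination this)
  have b12 : B 1 2 = 0 := by simpa [hl] using s4
  have b21 : B 2 1 = 0 := by simpa [hm] using q1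
  have hb22 : B 2 2 ≠ 0 := by
    intro b22
    refine hB (Matrix.det_eq_zero_of_column_eq_zero 2 (fun j => ?_))
    fin_cases j <;> assumption
  simp only [b12, b21] at q2 q3 q4 s1 s2 s3
  have hb11 : B 1 1 ≠ 0 := by
    intro b11
    rw [b11] at q2
    apply hb22; simpa using q2
  have b10 : B 1 0 = 0 := by simpa [hb22] using s2
  have b20 : B 2 0 = 0 := by simpa [hb22] using s1
  have b13 : B 1 3 = 0 := by simpa [hb11] using q4
  have b23 : B 2 3 = 0 := by simpa [hb11] using q3
  refine ⟨(B 1 1 * B 2 2)⁻¹, B 1 1, B 2 2, inv_ne_zero (mul_ne_zero hb11 hb22), hb11, hb22, ?_⟩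
  have hl' : l = B 1 1 ^ 2 / B 2 2 := by
    field_simp; linear_combination s3
  have hm' : m = B 2 2 ^ 2 / B 1 1 := by
    field_simp; linear_combination q2
  ext i j
  fin_cases i <;> fin_cases j <;>
    simp [symM, b00, b01, b02, b03, b10, b12, b13, b20, b21, b23, b30, b31, b32, b33] <;>
    first
    | (rw [hl']; field_simp)
    | (rw [hm']; field_simp)
    | field_simp

lemma Gq_vec {F : Type} [Field F] (A : GL (Fin 4) F)
    (hA : projAct F A '' twistedCubic F = twistedCubic F) (x y : F) (hxy : x ≠ 0 ∨ y ≠ 0) :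
    ∃ k x' y' : F, (x' ≠ 0 ∨ y' ≠ 0) ∧
      v3 x y ᵥ* (A : Matrix (Fin 4) (Fin 4) F) = k • v3 x' y' := by
  have h1 : projAct F A (Submodule.span F {v3 x y}) ∈ twistedCubic F := by
    rw [← hA]; exact ⟨_, v3_mem x y hxy, rfl⟩
  obtain ⟨x', y', hx', e⟩ := mem_twisted _ h1
  rw [projAct_span] at e
  have : v3 x y ᵥ* (A : Matrix (Fin 4) (Fin 4) F) ∈ Submodule.span F {v3 x' y'} := by
    rw [← e]; exact Submodule.mem_span_singleton_self _
  obtain ⟨k, hk⟩ := Submodule.mem_span_singleton.1 this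
  exact ⟨k, x', y', hx', hk.symm⟩

lemma vecMul_GL_eq_zero {F : Type} [Field F] (A : GL (Fin 4) F) (v : Fin 4 → F)
    (h : v ᵥ* (A : Matrix (Fin 4) (Fin 4) F) = 0) : v = 0 := by
  have : (v ᵥ* (A : Matrix (Fin 4) (Fin 4) F)) ᵥ* ((A⁻¹ : GL (Fin 4) F) : Matrix (Fin 4) (Fin 4) F) = v := by
    rw [Matrix.vecMul_vecMul, ← Units.val_mul, mul_inv_cancel]; simp
  rw [← this, h]; simp

lemma Gq_classify {F : Type} [Field F] [Fintype F] (hq : 5 ≤ Fintype.card F)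
    (f : Submodule F (Fin 4 → F) → Submodule F (Fin 4 → F)) (hf : f ∈ Gq F) :
    ∃ (a b c d : F) (h : a * d - b * c ≠ 0), f = projAct F (symG a b c d h) := by
  obtain ⟨⟨A, rfl⟩, hA⟩ := hf
  obtain ⟨k1, a, c, hac, e1⟩ := Gq_vec A hA 1 0 (Or.inl one_ne_zero)
  obtain ⟨k2, b, d, hbd, e2⟩ := Gq_vec A hA 0 1 (Or.inr one_ne_zero)
  have hΔ : a * d - b * c ≠ 0 := by
    intro h0
    obtain ⟨m, hb, hd⟩ : ∃ m, b = m * a ∧ d = m * c := by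
      by_cases ha : a = 0
      · have hc : c ≠ 0 := by simpa [ha] using hac
        have hb : b = 0 := by simpa [ha, hc] using h0
        exact ⟨d / c, by simp [ha, hb], by field_simp⟩
      · refine ⟨b / a, by field_simp, ?_⟩
        field_simp; linear_combination h0
    have hv : (v3 b d : Fin 4 → F) = m ^ 3 • v3 a c := by
      funext j; subst hb hd; fin_cases j <;> simp [v3] <;> ring
    have : ((k2 * m ^ 3) • v3 1 0 - k1 • v3 0 1 : Fin 4 → F) ᵥ* (A : Matrix (Fin 4) (Fin 4) F) = 0 := by
      rw [Matrix.sub_vecMul, Matrix.smul_vecMul, Matrix.smul_vecMul, e1, e2, hv]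
      simp only [smul_smul]
      rw [← sub_smul]
      convert zero_smul F _ using 2; ring
    have h1 := vecMul_GL_eq_zero A _ this
    have h2 := congrFun h1 3
    have hk1 : k1 = 0 := by simpa [v3] using h2
    rw [hk1, zero_smul] at e1
    have h3 := congrFun (vecMul_GL_eq_zero A _ e1) 0
    simp [v3] at h3
  have h' : d * a - (-b) * (-c) ≠ 0 := by convert hΔ using 1; ring
  have hBu : (A : Matrix (Fin 4) (Fin 4) F) * symM d (-b) (-c) a =
      ((A * symG d (-b) (-c) a h' : GL (Fin 4) F) : Matrix (Fin 4) (Fin 4) F) := rfl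
  obtain ⟨k, α, δ, hk, hα, hδ, hB⟩ := diag_case hq
    ((A : Matrix (Fin 4) (Fin 4) F) * symM d (-b) (-c) a)
    (by rw [hBu]; exact (Matrix.GeneralLinearGroup.det_ne_zero _))
    (k1 * (a * d - b * c) ^ 3) (k2 * (a * d - b * c) ^ 3)
    (by
      rw [← Matrix.vecMul_vecMul, e1, Matrix.smul_vecMul, v3_symM]
      funext j; fin_cases j <;> simp [v3] <;> ring_nf <;> simp)
    (by
      rw [← Matrix.vecMul_vecMul, e2, Matrix.smul_vecMul, v3_symM]
      funext j; fin_cases j <;> simp [v3] <;> ring_nf <;> simp)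
    (by
      intro t
      obtain ⟨k, x, y, -, e⟩ := Gq_vec A hA t 1 (Or.inr one_ne_zero)
      exact ⟨k, _, _, by rw [← Matrix.vecMul_vecMul, e, Matrix.smul_vecMul, v3_symM]⟩)
  have hdet : (a * α + b * 0) * (c * 0 + d * δ) - (a * 0 + b * δ) * (c * α + d * 0) ≠ 0 := by
    have : (a * α + b * 0) * (c * 0 + d * δ) - (a * 0 + b * δ) * (c * α + d * 0) =
      α * δ * (a * d - b * c) := by ring
    rw [this]; exact mul_ne_zero (mul_ne_zero hα hδ) hΔ
  refine ⟨_, _, _, _, hdet, ?_⟩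
  refine projAct_smul _ _ (((a * d - b * c) ^ 3)⁻¹ * k)
    (mul_ne_zero (inv_ne_zero (pow_ne_zero _ hΔ)) hk) ?_
  rw [symG_val, ← symM_mul, mul_smul, ← Matrix.smul_mul, ← hB, Matrix.mul_assoc, symM_adj_mul,
    Matrix.mul_smul, smul_smul, inv_mul_cancel₀ (pow_ne_zero _ hΔ), one_smul, Matrix.mul_one]

def Lsn {F : Type} [Field F] (s n : F) : Submodule F (Fin 4 → F) :=
  Submodule.span F {![-(s * n), -n, 0, 1], ![s ^ 2 - n, s, 1, 0]}

lemma mem_Lsn {F : Type} [Field F] (s n : F) (v : Fin 4 → F) :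
    v ∈ Lsn s n ↔ v 0 - s * v 1 + n * v 2 = 0 ∧ v 1 - s * v 2 + n * v 3 = 0 := by
  unfold Lsn
  rw [Submodule.mem_span_pair]
  constructor
  · rintro ⟨a, b, rfl⟩
    constructor <;> simp <;> ring
  · rintro ⟨h1, h2⟩
    refine ⟨v 3, v 2, ?_⟩
    funext j
    fin_cases j <;> simp
    · linear_combination -h1 - s * h2
    · linear_combination -h2

lemma finrank_Lsn {F : Type} [Field F] (s n : F) : Module.finrank F (Lsn s n) = 2 := by
  have hli : LinearIndependent F ![(![-(s * n), -n, 0, 1] : Fin 4 → F), ![s ^ 2 - n, s, 1, 0]] := by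
    rw [LinearIndependent.pair_iff]
    intro a b h
    have h3 := congrFun h 3
    have h2 := congrFun h 2
    simp at h2 h3
    exact ⟨h3, h2⟩
  have := finrank_span_eq_card hli
  have hr : Set.range ![(![-(s * n), -n, 0, 1] : Fin 4 → F), ![s ^ 2 - n, s, 1, 0]] =
      {![-(s * n), -n, 0, 1], ![s ^ 2 - n, s, 1, 0]} := Matrix.range_cons_cons_empty _ _ _
  rw [hr, Fintype.card_fin] at this
  exact this

lemma Lsn_eq_of_le {F : Type} [Field F] (s n : F) (W : Submodule F (Fin 4 → F)) (hW : W ≤ Lsn s n)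
    (h : Module.finrank F W = 2) : W = Lsn s n :=
  Submodule.eq_of_le_of_finrank_eq hW (by rw [h, finrank_Lsn])

lemma finrank_projAct {F : Type} [Field F] (A : GL (Fin 4) F) (W : Submodule F (Fin 4 → F)) :
    Module.finrank F (projAct F A W) = Module.finrank F W := by
  unfold projAct
  have hinj : Function.Injective (Matrix.vecMulLinear (A : Matrix (Fin 4) (Fin 4) F)) := by
    rw [injective_iff_map_eq_zero]
    intro v hv
    exact vecMul_GL_eq_zero A v (by simpa using hv)
  exact (LinearEquiv.finrank_eq (Submodule.equivMapOfInjective _ hinj W)).symm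

lemma symG_Lsn {F : Type} [Field F] (a b c d s n s' n' : F) (h : a * d - b * c ≠ 0)
    (hD : c ^ 2 * n + c * d * s + d ^ 2 ≠ 0)
    (hs : (c ^ 2 * n + c * d * s + d ^ 2) * s' = 2 * a * c * n + (a * d + b * c) * s + 2 * b * d)
    (hn : (c ^ 2 * n + c * d * s + d ^ 2) * n' = a ^ 2 * n + a * b * s + b ^ 2) :
    projAct F (symG a b c d h) (Lsn s n) = Lsn s' n' := by
  apply Lsn_eq_of_le
  · rw [projAct, Lsn, Submodule.map_span, Submodule.span_le]
    rintro _ ⟨v, hv, rfl⟩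
    rw [SetLike.mem_coe, mem_Lsn, Matrix.vecMulLinear_apply, symG_val]
    simp only [vecMul4]
    have red : ∀ y0 y1 y2 : F,
        (c ^ 2 * n + c * d * s + d ^ 2) * y0 -
          (2 * a * c * n + (a * d + b * c) * s + 2 * b * d) * y1 +
          (a ^ 2 * n + a * b * s + b ^ 2) * y2 = 0 → y0 - s' * y1 + n' * y2 = 0 := by
      intro y0 y1 y2 hy
      apply mul_left_cancel₀ hD
      linear_combination hy - y1 * hs + y2 * hn
    rcases hv with rfl | rfl
    · constructor <;> apply red <;> simp [symM] <;> ring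
    · constructor <;> apply red <;> simp [symM] <;> ring
  · rw [finrank_projAct, finrank_Lsn]

lemma noroot_of {F K : Type} [Field F] [Field K] [Algebra F K] (s n : F) (t : K)
    (ht : t ∉ Set.range (algebraMap F K))
    (h : t ^ 2 - algebraMap F K s * t + algebraMap F K n = 0) (x : F) :
    x ^ 2 - s * x + n ≠ 0 := by
  intro hx
  have hx' := congrArg (algebraMap F K) hx
  simp only [map_add, map_sub, map_mul, map_pow, map_zero] at hx'
  have : (t - algebraMap F K x) * (t + algebraMap F K x - algebraMap F K s) = 0 := by
    linear_combination h - hx'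
  rcases mul_eq_zero.1 this with h1 | h1
  · exact ht ⟨x, (sub_eq_zero.1 h1).symm⟩
  · exact ht ⟨s - x, by rw [map_sub]; linear_combination -h1⟩

lemma norm_ne {F : Type} [Field F] (s n : F) (hr : ∀ x : F, x ^ 2 - s * x + n ≠ 0)
    (p r : F) (h : p ≠ 0 ∨ r ≠ 0) : p ^ 2 * n + p * r * s + r ^ 2 ≠ 0 := by
  by_cases hp : p = 0
  · subst hp; simpa using h
  · intro h0
    apply hr (-(r / p))
    field_simp
    linear_combination h0

lemma lin_indep_t {F K : Type} [Field F] [Field K] [Algebra F K] (t : K)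
    (ht : t ∉ Set.range (algebraMap F K)) (a b : F)
    (h : algebraMap F K a * t + algebraMap F K b = 0) : a = 0 ∧ b = 0 := by
  have ha : a = 0 := by
    by_contra ha
    apply ht
    have : algebraMap F K a ≠ 0 := by simpa using ha
    refine ⟨-b / a, ?_⟩
    rw [map_div₀, map_neg]
    field_simp
    linear_combination -h
  subst ha
  simpa using h

lemma gen_t {F K : Type} [Field F] [Field K] [Algebra F K] [Fintype F] [Fintype K]
    (hK : Fintype.card K = Fintype.card F ^ 2) (t : K)
    (ht : t ∉ Set.range (algebraMap F K)) (z : K) :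
    ∃ a b : F, z = algebraMap F K a * t + algebraMap F K b := by
  have hb : Function.Bijective (fun p : F × F => algebraMap F K p.1 * t + algebraMap F K p.2) := by
    rw [Fintype.bijective_iff_injective_and_card]
    constructor
    · rintro ⟨a, b⟩ ⟨a', b'⟩ h
      simp only at h
      obtain ⟨h1, h2⟩ := lin_indep_t t ht (a - a') (b - b') (by
        rw [map_sub, map_sub]; linear_combination h)
      rw [sub_eq_zero.1 h1, sub_eq_zero.1 h2]
    · rw [Fintype.card_prod, hK, sq]
  obtain ⟨⟨a, b⟩, h⟩ := hb.2 z
  exact ⟨a, b, h.symm⟩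

lemma quad_t {F K : Type} [Field F] [Field K] [Algebra F K] [Fintype F] [Fintype K]
    (hK : Fintype.card K = Fintype.card F ^ 2) (t : K)
    (ht : t ∉ Set.range (algebraMap F K)) :
    ∃ s n : F, t ^ 2 - algebraMap F K s * t + algebraMap F K n = 0 := by
  obtain ⟨a, b, h⟩ := gen_t hK t ht (t ^ 2)
  exact ⟨a, -b, by rw [map_neg]; linear_combination h⟩

lemma exists_t {F K : Type} [Field F] [Field K] [Algebra F K] [Fintype F] [Fintype K]
    (hK : Fintype.card K = Fintype.card F ^ 2) (hq : 5 ≤ Fintype.card F) :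
    ∃ t : K, t ∉ Set.range (algebraMap F K) := by
  by_contra hc
  push Not at hc
  have := Fintype.card_le_of_surjective (algebraMap F K) hc
  nlinarith

lemma frob_ne {F K : Type} [Field F] [Field K] [Algebra F K] [Fintype F]
    (t : K) (ht : t ∉ Set.range (algebraMap F K)) : t ^ Fintype.card F ≠ t := by
  intro h
  have h1 : 1 < Fintype.card F := Fintype.one_lt_card
  have hp := FiniteField.X_pow_card_sub_X_ne_zero K h1
  have hd := FiniteField.X_pow_card_sub_X_natDegree_eq K h1
  apply hp
  apply Polynomial.eq_zero_of_natDegree_lt_card_of_eval_eq_zero _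
    (f := fun o : Option F => o.elim t (algebraMap F K))
  · rintro (_ | x) (_ | y) hxy
    · rfl
    · exact absurd ⟨y, hxy.symm⟩ ht
    · exact absurd ⟨x, hxy⟩ ht
    · simpa using hxy
  · rintro (_ | x)
    · simp [h]
    · simp [← map_pow, FiniteField.pow_card]
  · rw [hd, Fintype.card_option]; omega

lemma frob_eq {F K : Type} [Field F] [Field K] [Algebra F K] [Fintype F] (s n : F)
    (t : K) (ht : t ∉ Set.range (algebraMap F K))
    (h : t ^ 2 - algebraMap F K s * t + algebraMap F K n = 0) :
    t ^ Fintype.card F = algebraMap F K s - t := by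
  have h' := congrArg (FiniteField.frobeniusAlgHom F K) h
  simp only [map_add, map_sub, map_mul, map_pow, map_zero, AlgHom.commutes,
    FiniteField.coe_frobeniusAlgHom] at h'
  have : (t ^ Fintype.card F - t) * (t ^ Fintype.card F + t - algebraMap F K s) = 0 := by
    linear_combination h' - h
  rcases mul_eq_zero.1 this with h1 | h1
  · exact absurd (sub_eq_zero.1 h1) (frob_ne t ht)
  · linear_combination h1

lemma imag_elim {F K : Type} [Field F] [Field K] [Algebra F K] [Fintype F] [Fintype K]
    (hK : Fintype.card K = Fintype.card F ^ 2) (l : Submodule F (Fin 4 → F))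
    (h : isImagChord F K (Fintype.card F) l) :
    ∃ (s n : F) (t : K), t ∉ Set.range (algebraMap F K) ∧
      t ^ 2 - algebraMap F K s * t + algebraMap F K n = 0 ∧ l = Lsn s n := by
  obtain ⟨⟨hl, -⟩, t, ht, he⟩ := h
  obtain ⟨s, n, hsn⟩ := quad_t hK t ht
  refine ⟨s, n, t, ht, hsn, ?_⟩
  apply Lsn_eq_of_le _ _ _ _ hl
  intro v hv
  have hm : (fun i => algebraMap F K (v i)) ∈ extendSub F K l :=
    Submodule.subset_span ⟨v, hv, rfl⟩
  rw [he, frob_eq s n t ht hsn, Submodule.mem_span_pair] at hm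
  obtain ⟨α, β, hab⟩ := hm
  have h0 := congrFun hab 0
  have h1 := congrFun hab 1
  have h2 := congrFun hab 2
  have h3 := congrFun hab 3
  simp at h0 h1 h2 h3
  rw [mem_Lsn]
  have inj := (algebraMap F K).injective
  constructor
  · apply inj
    simp only [map_add, map_sub, map_mul, map_zero, ← h0, ← h1, ← h2]
    linear_combination (α * t + β * (algebraMap F K s - t)) * hsn
  · apply inj
    simp only [map_add, map_sub, map_mul, map_zero, ← h3, ← h1, ← h2]
    linear_combination (α + β) * hsn

lemma imag_intro {F K : Type} [Field F] [Field K] [Algebra F K] [Fintype F] (s n : F)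
    (t : K) (ht : t ∉ Set.range (algebraMap F K))
    (h : t ^ 2 - algebraMap F K s * t + algebraMap F K n = 0) :
    isImagChord F K (Fintype.card F) (Lsn s n) := by
  have hne : algebraMap F K s - t - t ≠ 0 := by
    rw [← frob_eq s n t ht h]; exact sub_ne_zero.2 (frob_ne t ht)
  refine ⟨⟨finrank_Lsn s n, ?_⟩, t, ht, ?_⟩
  · rintro _ ⟨v, hv, rfl⟩ hle
    have hm : v ∈ Lsn s n := hle (Submodule.mem_span_singleton_self v)
    rw [mem_Lsn] at hm
    rcases hv with ⟨x, rfl⟩ | rfl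
    · apply noroot_of s n t ht h x
      simpa using hm.2
    · simp at hm
  · rw [frob_eq s n t ht h]
    apply le_antisymm
    · rw [extendSub, Submodule.span_le]
      rintro _ ⟨v, hv, rfl⟩
      have hm := (mem_Lsn s n v).1 hv
      have h1 := congrArg (algebraMap F K) hm.1
      have h2 := congrArg (algebraMap F K) hm.2
      simp only [map_add, map_sub, map_mul, map_zero] at h1 h2
      rw [SetLike.mem_coe, Submodule.mem_span_pair]
      refine ⟨((algebraMap F K s - t) * algebraMap F K (v 3) - algebraMap F K (v 2)) /
          (algebraMap F K s - t - t),
        (algebraMap F K (v 2) - t * algebraMap F K (v 3)) / (algebraMap F K s - t - t), ?_⟩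
      have hn : algebraMap F K n = algebraMap F K s * t - t ^ 2 := by linear_combination h
      rw [hn] at h1 h2
      have e1 : algebraMap F K (v 1) = algebraMap F K s * algebraMap F K (v 2) -
        (algebraMap F K s * t - t ^ 2) * algebraMap F K (v 3) := by linear_combination h2
      have e0 : algebraMap F K (v 0) = algebraMap F K s * algebraMap F K (v 1) -
        (algebraMap F K s * t - t ^ 2) * algebraMap F K (v 2) := by linear_combination h1
      rw [e1] at e0
      funext j
      fin_cases j
      · simp [e0]; field_simp; ring
      · simp [e1]; field_simp; ring
      · simp; field_simp; ring
      · simp; field_simp; ring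
    · have hu : (fun i => algebraMap F K ((![-(s * n), -n, 0, 1] : Fin 4 → F) i)) ∈
          extendSub F K (Lsn s n) :=
        Submodule.subset_span ⟨_, Submodule.subset_span (by simp), rfl⟩
      have hw : (fun i => algebraMap F K ((![s ^ 2 - n, s, 1, 0] : Fin 4 → F) i)) ∈
          extendSub F K (Lsn s n) :=
        Submodule.subset_span ⟨_, Submodule.subset_span (by simp), rfl⟩
      have key : ∀ z : K, z ^ 2 - algebraMap F K s * z + algebraMap F K n = 0 →
          ![z ^ 3, z ^ 2, z, 1] ∈ extendSub F K (Lsn s n) := by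
        intro z hz
        have := Submodule.add_mem _ hu (Submodule.smul_mem _ z hw)
        convert this using 1
        funext j
        fin_cases j <;> simp
        · linear_combination (z + algebraMap F K s) * hz
        · linear_combination hz
      rw [Submodule.span_le]
      rintro v (rfl | rfl)
      · exact key t h
      · exact key _ (by linear_combination h)

lemma cross_v3 {F : Type} [Field F] (x y x' y' : F)
    (h : Submodule.span F {v3 x y} = Submodule.span F {v3 x' y'}) : x * y' = y * x' := by
  have hm : v3 x' y' ∈ Submodule.span F {v3 x y} := by
    rw [h]; exact Submodule.mem_span_singleton_self _
  obtain ⟨k, hk⟩ := Submodule.mem_span_singleton.1 hm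
  have h0 := congrFun hk 0
  have h1 := congrFun hk 1
  have h2 := congrFun hk 2
  have h3 := congrFun hk 3
  simp [v3] at h0 h1 h2 h3
  have : (x * y' - y * x') ^ 3 = 0 := by
    linear_combination -x ^ 3 * h3 + 3 * x ^ 2 * y * h2 - 3 * x * y ^ 2 * h1 + y ^ 3 * h0
  exact sub_eq_zero.1 (pow_eq_zero_iff (three_ne_zero) |>.1 this)

lemma symG_inj {F : Type} [Field F] (a b c d a' b' c' d' : F) (h : a * d - b * c ≠ 0)
    (h' : a' * d' - b' * c' ≠ 0)
    (e : projAct F (symG a b c d h) = projAct F (symG a' b' c' d' h')) :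
    ∃ k : F, a' = k * a ∧ b' = k * b ∧ c' = k * c ∧ d' = k * d := by
  have cr : ∀ x y : F, (a * x + b * y) * (c' * x + d' * y) = (c * x + d * y) * (a' * x + b' * y) := by
    intro x y
    apply cross_v3
    have := congrFun e (Submodule.span F {v3 x y})
    rwa [projAct_span, projAct_span, symG_val, symG_val, v3_symM, v3_symM] at this
  have c1 : a * c' = c * a' := by simpa using cr 1 0
  have c2 : b * d' = d * b' := by simpa using cr 0 1
  have c3 : a * d' + b * c' = c * b' + d * a' := by
    linear_combination cr 1 1 - c1 - c2
  refine ⟨(a * d' - c * b') / (a * d - b * c), ?_, ?_, ?_, ?_⟩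
  · rw [div_mul_eq_mul_div, eq_div_iff h]; linear_combination -a * c3 + b * c1
  · rw [div_mul_eq_mul_div, eq_div_iff h]; linear_combination -a * c2
  · rw [div_mul_eq_mul_div, eq_div_iff h]; linear_combination d * c1 - c * c3
  · rw [div_mul_eq_mul_div, eq_div_iff h]; linear_combination -c * c2

lemma map_symM {F K : Type} [Field F] [Field K] [Algebra F K] (a b c d : F) (i j : Fin 4) :
    algebraMap F K (symM a b c d i j) =
      symM (algebraMap F K a) (algebraMap F K b) (algebraMap F K c) (algebraMap F K d) i j := by
  fin_cases i <;> fin_cases j <;> simp [symM, map_ofNat (algebraMap F K)]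

lemma stab_elim {F K : Type} [Field F] [Field K] [Algebra F K] (s n : F)
    (t : K) (ht : t ∉ Set.range (algebraMap F K))
    (hsn : t ^ 2 - algebraMap F K s * t + algebraMap F K n = 0)
    (a b c d : F) (h : a * d - b * c ≠ 0)
    (hL : projAct F (symG a b c d h) (Lsn s n) = Lsn s n) :
    (a = c * s + d ∧ b = -(c * n)) ∨ (a = -d ∧ b = c * n + d * s) := by
  have hu : (![-(s * n), -n, 0, 1] : Fin 4 → F) ᵥ* symM a b c d ∈ Lsn s n := by
    rw [← hL]; exact ⟨![-(s * n), -n, 0, 1], Submodule.subset_span (by simp), by simp [symG_val]⟩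
  have hw : (![s ^ 2 - n, s, 1, 0] : Fin 4 → F) ᵥ* symM a b c d ∈ Lsn s n := by
    rw [← hL]; exact ⟨![s ^ 2 - n, s, 1, 0], Submodule.subset_span (by simp), by simp [symG_val]⟩
  have key : ∀ j, algebraMap F K (((![-(s * n), -n, 0, 1] : Fin 4 → F) ᵥ* symM a b c d) j) +
      t * algebraMap F K (((![s ^ 2 - n, s, 1, 0] : Fin 4 → F) ᵥ* symM a b c d) j) =
      v3 (algebraMap F K a * t + algebraMap F K b) (algebraMap F K c * t + algebraMap F K d) j := by
    intro j
    have := congrFun (v3_symM (algebraMap F K a) (algebraMap F K b) (algebraMap F K c)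
      (algebraMap F K d) t 1) j
    rw [mul_one, mul_one] at this
    rw [← this]
    simp only [vecMul4, map_add, map_mul, map_symM]
    simp [v3]
    linear_combination -((t + algebraMap F K s) * symM (algebraMap F K a) (algebraMap F K b)
      (algebraMap F K c) (algebraMap F K d) 0 j + symM (algebraMap F K a) (algebraMap F K b)
      (algebraMap F K c) (algebraMap F K d) 1 j) * hsn
  rw [mem_Lsn] at hu hw
  have u1 := congrArg (algebraMap F K) hu.1
  have u2 := congrArg (algebraMap F K) hu.2
  have w1 := congrArg (algebraMap F K) hw.1
  have w2 := congrArg (algebraMap F K) hw.2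
  simp only [map_add, map_sub, map_mul, map_zero] at u1 u2 w1 w2
  have k0 := key 0
  have k1 := key 1
  have k2 := key 2
  have k3 := key 3
  obtain ⟨X, hX⟩ : ∃ X, X = algebraMap F K a * t + algebraMap F K b := ⟨_, rfl⟩
  obtain ⟨Y, hY⟩ : ∃ Y, Y = algebraMap F K c * t + algebraMap F K d := ⟨_, rfl⟩
  rw [← hX, ← hY] at k0 k1 k2 k3
  have E1 : X * (X ^ 2 - algebraMap F K s * X * Y + algebraMap F K n * Y ^ 2) = 0 := by
    simp only [v3, Matrix.cons_val] at k0 k1 k2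
    linear_combination u1 + t * w1 - k0 + algebraMap F K s * k1 - algebraMap F K n * k2
  have E2 : Y * (X ^ 2 - algebraMap F K s * X * Y + algebraMap F K n * Y ^ 2) = 0 := by
    simp only [v3, Matrix.cons_val] at k1 k2 k3
    linear_combination u2 + t * w2 - k1 + algebraMap F K s * k2 - algebraMap F K n * k3
  have hQ : X ^ 2 - algebraMap F K s * X * Y + algebraMap F K n * Y ^ 2 = 0 := by
    rcases mul_eq_zero.1 E1 with x0 | q
    · rcases mul_eq_zero.1 E2 with y0 | q
      · rw [x0, y0]; ring
      · exact q
    · exact q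
  have hQ' : (X - t * Y) * (X - (algebraMap F K s - t) * Y) = 0 := by
    linear_combination hQ - Y ^ 2 * hsn
  rw [hX, hY] at hQ'
  rcases mul_eq_zero.1 hQ' with q | q
  · left
    obtain ⟨r1, r2⟩ := lin_indep_t t ht (a - (c * s + d)) (b + c * n) (by
      simp only [map_add, map_sub, map_mul]
      linear_combination q + algebraMap F K c * hsn)
    exact ⟨sub_eq_zero.1 r1, by linear_combination r2⟩
  · right
    obtain ⟨r1, r2⟩ := lin_indep_t t ht (a + d) (b - (c * n + d * s)) (by
      simp only [map_add, map_sub, map_mul]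
      linear_combination q - algebraMap F K c * hsn)
    exact ⟨by linear_combination r1, by linear_combination r2⟩

def cOf {F : Type} [Field F] (o : Option F) : F := o.elim 0 (fun _ => 1)
def dOf {F : Type} [Field F] (o : Option F) : F := o.elim 1 id
def aOf {F : Type} [Field F] (s : F) (p : Option F × Bool) : F :=
  bif p.2 then cOf p.1 * s + dOf p.1 else -dOf p.1
def bOf {F : Type} [Field F] (s n : F) (p : Option F × Bool) : F :=
  bif p.2 then -(cOf p.1 * n) else cOf p.1 * n + dOf p.1 * s

lemma cd_ne {F : Type} [Field F] (o : Option F) : cOf o ≠ 0 ∨ dOf o ≠ 0 := by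
  cases o <;> simp [cOf, dOf]

lemma exists_o {F : Type} [Field F] (c d : F) (h : c ≠ 0 ∨ d ≠ 0) :
    ∃ (o : Option F) (k : F), k ≠ 0 ∧ c = k * cOf o ∧ d = k * dOf o := by
  by_cases hc : c = 0
  · refine ⟨none, d, by simpa [hc] using h, by simp [cOf, hc], by simp [dOf]⟩
  · refine ⟨some (d / c), c, hc, by simp [cOf], ?_⟩
    simp [dOf]; field_simp

lemma o_inj {F : Type} [Field F] (o o' : Option F) (k : F) (hc : cOf o' = k * cOf o)
    (hd : dOf o' = k * dOf o) : o = o' ∧ k = 1 := by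
  cases o <;> cases o' <;> simp [cOf, dOf] at hc hd
  · exact ⟨rfl, hd.symm⟩
  · subst hc; simp at hd
  · subst hc; simp [hd]

lemma stab_card {F K : Type} [Field F] [Field K] [Algebra F K] [Fintype F]
    (hq : 5 ≤ Fintype.card F) (s n : F)
    (t : K) (ht : t ∉ Set.range (algebraMap F K))
    (hsn : t ^ 2 - algebraMap F K s * t + algebraMap F K n = 0) :
    (lineStab F (Lsn s n)).ncard = 2 * (Fintype.card F + 1) := by
  have hne : algebraMap F K s - t - t ≠ 0 := by
    rw [← frob_eq s n t ht hsn]; exact sub_ne_zero.2 (frob_ne t ht)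
  have hD : ∀ o : Option F, cOf o ^ 2 * n + cOf o * dOf o * s + dOf o ^ 2 ≠ 0 := fun o =>
    norm_ne s n (noroot_of s n t ht hsn) _ _ (cd_ne o)
  have hdet : ∀ p : Option F × Bool,
      aOf s p * dOf p.1 - bOf s n p * cOf p.1 ≠ 0 := by
    rintro ⟨o, _ | _⟩ h0
    · apply hD o; simp [aOf, bOf] at h0; linear_combination -h0
    · apply hD o; simp [aOf, bOf] at h0; linear_combination h0
  let Ψ : Option F × Bool → (Submodule F (Fin 4 → F) → Submodule F (Fin 4 → F)) := fun p =>
    projAct F (symG (aOf s p) (bOf s n p) (cOf p.1) (dOf p.1) (hdet p))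
  have hinj : Function.Injective Ψ := by
    rintro ⟨o, e⟩ ⟨o', e'⟩ hp
    obtain ⟨k, ka, kb, kc, kd⟩ := symG_inj _ _ _ _ _ _ _ _ _ _ hp
    obtain ⟨rfl, rfl⟩ := o_inj _ _ _ kc kd
    have hY : algebraMap F K (cOf o) * t + algebraMap F K (dOf o) ≠ 0 := by
      intro h0
      obtain ⟨h1, h2⟩ := lin_indep_t t ht _ _ h0
      rcases cd_ne o with h | h
      · exact h h1
      · exact h h2
    have contra : cOf o * s + dOf o = -dOf o → -(cOf o * n) = cOf o * n + dOf o * s → False := by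
      intro h1 h2
      apply mul_ne_zero hne hY
      have h1' := congrArg (algebraMap F K) h1
      have h2' := congrArg (algebraMap F K) h2
      simp only [map_add, map_mul, map_neg] at h1' h2'
      linear_combination -t * h1' - h2' - 2 * algebraMap F K (cOf o) * hsn
    cases e <;> cases e' <;> simp [aOf, bOf] at ka kb ⊢
    · exact contra ka kb
    · exact contra ka.symm kb.symm
  have hrange : lineStab F (Lsn s n) = Set.range Ψ := by
    apply Set.Subset.antisymm
    · rintro f ⟨hf, hfL⟩
      obtain ⟨a, b, c, d, h, rfl⟩ := Gq_classify hq f hf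
      have hcd : c ≠ 0 ∨ d ≠ 0 := by
        by_contra hc
        push Not at hc
        apply h; rw [hc.1, hc.2]; ring
      obtain ⟨o, k, hk, rfl, rfl⟩ := exists_o c d hcd
      have fin : ∀ e : Bool, a = k * aOf s (o, e) → b = k * bOf s n (o, e) →
          projAct F (symG a b (k * cOf o) (k * dOf o) h) ∈ Set.range Ψ := by
        intro e ha hb
        refine ⟨(o, e), ?_⟩
        symm
        apply projAct_smul _ _ (k ^ 3) (pow_ne_zero _ hk)
        rw [symG_val, symG_val, ← symM_smul, ha, hb]
      rcases stab_elim s n t ht hsn _ _ _ _ h hfL with ⟨h1, h2⟩ | ⟨h1, h2⟩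
      · apply fin true
        · rw [h1]; simp [aOf]; ring
        · rw [h2]; simp [bOf]; ring
      · apply fin false
        · rw [h1]; simp [aOf]
        · rw [h2]; simp [bOf]; ring
    · rintro _ ⟨⟨o, e⟩, rfl⟩
      refine ⟨symG_mem _ _ _ _ _, ?_⟩
      apply symG_Lsn _ _ _ _ _ _ _ _ _ (hD o)
      · cases e <;> simp [aOf, bOf] <;> ring
      · cases e <;> simp [aOf, bOf] <;> ring
  rw [hrange, ← Set.image_univ, Set.ncard_image_of_injective _ hinj, Set.ncard_univ]
  simp; ring

lemma div_quad {K : Type} [Field K] (X Y D S N : K) (hY : Y ≠ 0) (hD : D ≠ 0)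
    (h : D * X ^ 2 - S * X * Y + N * Y ^ 2 = 0) : (X / Y) ^ 2 - S / D * (X / Y) + N / D = 0 := by
  field_simp
  linear_combination h

lemma orbit_eq {F K : Type} [Field F] [Field K] [Algebra F K] [Fintype F] [Fintype K]
    (hK : Fintype.card K = Fintype.card F ^ 2) (hq : 5 ≤ Fintype.card F) (s n : F)
    (t : K) (ht : t ∉ Set.range (algebraMap F K))
    (hsn : t ^ 2 - algebraMap F K s * t + algebraMap F K n = 0) :
    {l : Submodule F (Fin 4 → F) | isImagChord F K (Fintype.card F) l} = lineOrbit F (Lsn s n) := by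
  apply Set.Subset.antisymm
  · intro l hl
    obtain ⟨s', n', t', ht', hsn', rfl⟩ := imag_elim hK l hl
    obtain ⟨a, b, hab⟩ := gen_t hK t ht t'
    have ha : a ≠ 0 := by
      rintro rfl
      exact ht' ⟨b, by simp [hab]⟩
    have hdet : a * 1 - b * 0 ≠ 0 := by simpa using ha
    obtain ⟨r1, r2⟩ := lin_indep_t t' ht' (a * s + 2 * b - s') (n' - (a ^ 2 * n + a * b * s + b ^ 2)) (by
      simp only [map_add, map_sub, map_mul, map_pow, map_ofNat]
      rw [hab] at hsn' ⊢
      linear_combination hsn' - (algebraMap F K a) ^ 2 * hsn)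
    refine ⟨_, symG_mem a b 0 1 hdet, ?_⟩
    apply symG_Lsn
    · simp
    · linear_combination -r1
    · linear_combination r2
  · rintro _ ⟨f, hf, rfl⟩
    obtain ⟨a, b, c, d, h, rfl⟩ := Gq_classify hq f hf
    have hcd : c ≠ 0 ∨ d ≠ 0 := by
      by_contra hc
      push Not at hc
      apply h; rw [hc.1, hc.2]; ring
    have hD : c ^ 2 * n + c * d * s + d ^ 2 ≠ 0 :=
      norm_ne s n (noroot_of s n t ht hsn) _ _ hcd
    rw [Set.mem_ofPred_eq, symG_Lsn a b c d s n
      ((2 * a * c * n + (a * d + b * c) * s + 2 * b * d) / (c ^ 2 * n + c * d * s + d ^ 2))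
      ((a ^ 2 * n + a * b * s + b ^ 2) / (c ^ 2 * n + c * d * s + d ^ 2)) h hD
      (mul_div_cancel₀ _ hD) (mul_div_cancel₀ _ hD)]
    have hY : algebraMap F K c * t + algebraMap F K d ≠ 0 := by
      intro h0
      obtain ⟨h1, h2⟩ := lin_indep_t t ht _ _ h0
      rcases hcd with h | h
      · exact h h1
      · exact h h2
    apply imag_intro _ _ ((algebraMap F K a * t + algebraMap F K b) /
      (algebraMap F K c * t + algebraMap F K d))
    · rintro ⟨x, hx⟩
      rw [eq_div_iff hY] at hx
      obtain ⟨h1, h2⟩ := lin_indep_t t ht (a - x * c) (b - x * d) (by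
        simp only [map_sub, map_mul]; linear_combination -hx)
      apply h
      linear_combination d * h1 - c * h2
    · have hD' : (algebraMap F K c) ^ 2 * algebraMap F K n +
          algebraMap F K c * algebraMap F K d * algebraMap F K s + algebraMap F K d ^ 2 ≠ 0 := by
        have := (map_ne_zero (algebraMap F K)).2 hD
        simpa using this
      have hn : algebraMap F K n = algebraMap F K s * t - t ^ 2 := by linear_combination hsn
      simp only [map_div₀, map_add, map_mul, map_pow, map_ofNat]
      apply div_quad _ _ _ _ _ hY hD'
      rw [hn]
      ring

theorem stmt_6 (q : ℕ) (F : Type) [Field F] [Fintype F]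
    (hcard : Fintype.card F = q) (K : Type) [Field K] [Fintype K] [Algebra F K] (hcardK : Fintype.card K = q ^ 2) (hq : 5 ≤ q) :
    (∃ ℓ₀ : Submodule F (Fin 4 → F), {ℓ : Submodule F (Fin 4 → F) | isImagChord F K q ℓ} = lineOrbit F ℓ₀) ∧
    ∀ ℓ : Submodule F (Fin 4 → F), isImagChord F K q ℓ → (lineStab F ℓ).ncard = 2 * (q + 1) := by
  subst hcard
  constructor
  · obtain ⟨t, ht⟩ := exists_t (F := F) (K := K) hcardK hq
    obtain ⟨s, n, hsn⟩ := quad_t hcardK t ht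
    exact ⟨Lsn s n, orbit_eq hcardK hq s n t ht hsn⟩
  · intro l hl
    obtain ⟨s, n, t, ht, hsn, rfl⟩ := imag_elim hcardK l hl
    exact stab_card hq s n t ht hsn
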